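/- (Left-discarding lemma) If 0 ≤ g < h < i ≤ n and x_h + y_h ≤ x_i, then for every i' with i ≤ i' ≤ n one has y_{i'} ≤ x_{i'} − x_h < x_{i'} − x_g; in particular, the index g is never the maximizer in the recurrence y_{i'} = x_{i'} − max{ x_j : j < i', x_j + y_j ≤ x_{i'} } for any i' ≥ i. -/

import Mathlib

/-- `pSum L i` is `x_i`: the sum of the first `i` elements of `L` (so `pSum L 0 = 0`). -/
def pSum (L : List ℝ) (i : ℕ) : ℝ := (L.take i).sum

/-- A valid partition of `L`: a partition of `L` into nonempty consecutive blocks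
whose totals are non-decreasing from left to right. -/
def ValidPartition (L : List ℝ) (P : List (List ℝ)) : Prop :=
  P.flatten = L ∧ (∀ B ∈ P, B ≠ []) ∧ List.Chain' (· ≤ ·) (P.map List.sum)

/-- The total of the last block of a partition (`0` for the empty partition). -/
def lastTotal (P : List (List ℝ)) : ℝ := (P.map List.sum).getLastD 0

/-- `wrapLen L` is the wrapping length `y_{|L|}`: the minimum, over all valid
partitions of `L`, of the total of the last block (with `wrapLen [] = 0`,
realized by the empty partition). -/
noncomputable def wrapLen (L : List ℝ) : ℝ :=
  sInf {t | ∃ P, ValidPartition L P ∧ lastTotal P = t}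

/-!
If the last block of an optimal valid partition of `l_1, …, l_h` has total at most `x_i - x_h`,
then `l_{h+1}, …, l_i` can be appended to that partition as one further block. Since the `x_k`
increase with `k`, the same condition persists for every `i' ≥ i`, and the appended block is
shorter than one starting after `l_g`. The minimum defining `y_h` is attained because the last
block of a partition is a suffix, so it has only finitely many possible totals.
-/

theorem lastTotal_append_singleton (P : List (List ℝ)) (B : List ℝ) :
    lastTotal (P ++ [B]) = B.sum := by
  simp [lastTotal]

theorem lastTotal_eq_of_mem_getLast? {P : List (List ℝ)} {t : ℝ}
    (ht : t ∈ (P.map List.sum).getLast?) : lastTotal P = t := by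
  rw [lastTotal, List.getLastD_eq_getLast?, Option.mem_def.mp ht, Option.getD_some]

theorem exists_suffix_flatten_sum_eq_lastTotal (P : List (List ℝ)) :
    ∃ S, S <:+ P.flatten ∧ S.sum = lastTotal P := by
  obtain rfl | ⟨Q, B, rfl⟩ := P.eq_nil_or_concat'
  · exact ⟨[], List.nil_suffix, rfl⟩
  · exact ⟨B, ⟨Q.flatten, by simp⟩, (lastTotal_append_singleton Q B).symm⟩

theorem exists_validPartition (L : List ℝ) : ∃ P, ValidPartition L P := by
  obtain rfl | hL := eq_or_ne L []
  · exact ⟨[], rfl, by simp, .nil⟩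
  · exact ⟨[L], by simp, by simpa using hL, .singleton _⟩

theorem ValidPartition.append_singleton {L : List ℝ} {P : List (List ℝ)}
    (hP : ValidPartition L P) {B : List ℝ} (hB : B ≠ []) (hle : lastTotal P ≤ B.sum) :
    ValidPartition (L ++ B) (P ++ [B]) := by
  obtain ⟨rfl, hne, hchain⟩ := hP
  refine ⟨by simp, by simpa [or_imp, forall_and] using ⟨hne, hB⟩, ?_⟩
  rw [List.map_append]
  refine hchain.append (.singleton _) fun t ht u hu => ?_
  obtain rfl : B.sum = u := by simpa using hu
  exact (lastTotal_eq_of_mem_getLast? ht).symm.trans_le hle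

theorem finite_lastTotal_image (L : List ℝ) : (lastTotal '' {P | ValidPartition L P}).Finite := by
  refine (List.finite_toSet (L.tails.map List.sum)).subset ?_
  rintro _ ⟨P, ⟨rfl, -, -⟩, rfl⟩
  obtain ⟨S, hS, hsum⟩ := exists_suffix_flatten_sum_eq_lastTotal P
  exact List.mem_map.mpr ⟨S, (List.mem_tails S P.flatten).mpr hS, hsum⟩

theorem isLeast_wrapLen (L : List ℝ) :
    IsLeast (lastTotal '' {P | ValidPartition L P}) (wrapLen L) :=
  have hfin := finite_lastTotal_image L
  have hne : (lastTotal '' {P | ValidPartition L P}).Nonempty :=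
    Set.Nonempty.image _ (exists_validPartition L)
  hfin.isClosed.isLeast_csInf hne hfin.bddBelow

theorem wrapLen_append_le {L B : List ℝ} (hB : B ≠ []) (hle : wrapLen L ≤ B.sum) :
    wrapLen (L ++ B) ≤ B.sum := by
  obtain ⟨P, hP, hlast⟩ := (isLeast_wrapLen L).1
  exact (isLeast_wrapLen (L ++ B)).2
    ⟨P ++ [B], hP.append_singleton hB (hlast.trans_le hle), lastTotal_append_singleton P B⟩

theorem take_append_drop_take {α : Type*} (L : List α) {a b : ℕ} (hab : a ≤ b) :
    L.take a ++ (L.take b).drop a = L.take b := by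
  simpa [List.take_take, hab] using List.take_append_drop a (L.take b)

theorem sum_drop_take_eq_pSum_sub (L : List ℝ) {a b : ℕ} (hab : a ≤ b) :
    ((L.take b).drop a).sum = pSum L b - pSum L a := by
  have hsplit := congrArg List.sum (take_append_drop_take L hab)
  rw [List.sum_append] at hsplit
  exact eq_sub_of_add_eq' hsplit

theorem strictMonoOn_pSum {L : List ℝ} (hL : ∀ l ∈ L, 0 < l) :
    StrictMonoOn (pSum L) (Set.Iic L.length) := by
  refine strictMonoOn_of_lt_add_one Set.ordConnected_Iic fun k _ _ hk => ?_
  rw [pSum, pSum, List.sum_take_succ L k hk]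
  exact lt_add_of_pos_right _ (hL _ (List.getElem_mem hk))

theorem wrapLen_take_le_pSum_sub {L : List ℝ} {h i : ℕ} (hhi : h < i) (hi : i ≤ L.length)
    (hfold : pSum L h + wrapLen (L.take h) ≤ pSum L i) :
    wrapLen (L.take i) ≤ pSum L i - pSum L h := by
  have hblock : (L.take i).drop h ≠ [] := by
    simpa [List.drop_eq_nil_iff] using ⟨hhi, hhi.trans_le hi⟩
  have hle : wrapLen (L.take h) ≤ ((L.take i).drop h).sum := by
    rw [sum_drop_take_eq_pSum_sub L hhi.le]
    exact le_sub_iff_add_le'.mpr hfold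
  have happend := wrapLen_append_le hblock hle
  rwa [take_append_drop_take L hhi.le, sum_drop_take_eq_pSum_sub L hhi.le] at happend

/-- Left-discarding lemma: If `0 ≤ g < h < i ≤ n` and
`x_h + y_h ≤ x_i`, then for every `i'` with `i ≤ i' ≤ n` one has
`y_{i'} ≤ x_{i'} − x_h < x_{i'} − x_g`; so the index `g` is never the maximizer
in the recurrence for any `i' ≥ i`. -/
theorem stmt_4 (L : List ℝ) (hL : ∀ l ∈ L, 0 < l) (g h i : ℕ) (hgh : g < h)
    (hhi : h < i) (hin : i ≤ L.length)
    (hfold : pSum L h + wrapLen (L.take h) ≤ pSum L i) :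
    ∀ i', i ≤ i' → i' ≤ L.length →
      wrapLen (L.take i') ≤ pSum L i' - pSum L h ∧
      pSum L i' - pSum L h < pSum L i' - pSum L g := by
  intro i' hii' hi'
  have hmono := strictMonoOn_pSum hL
  have hle : pSum L i ≤ pSum L i' := hmono.monotoneOn hin hi' hii'
  have hlt : pSum L g < pSum L h :=
    hmono ((hgh.trans hhi).le.trans hin) (hhi.le.trans hin) hgh
  exact ⟨wrapLen_take_le_pSum_sub (hhi.trans_le hii') hi' (hfold.trans hle),
    sub_lt_sub_left hlt _⟩
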